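/- arXiv:1503.04048 — 3 statements merged into one kernel-verified Lean document; each statement's English description precedes it below -/
import Mathlib

section
/- Let D be any digraph of order n. Then γ_oso(D) = n if, and only if, for every vertex u of D, d⁺(u)=0 or d⁻(u)=0. -/
/-!
Every superset of an OSODS is an OSODS, so `γ_oso = n` exactly when no set `V ∖ {v}` is an OSODS.
In `V ∖ {v}` a defender of `v` is an in-neighbor `u` of `v`, and the swap turns the set into
`V ∖ {u}`, which is out-dominating exactly when `u` has an in-neighbor. Hence some `V ∖ {v}` is an
OSODS exactly when some vertex `u` has both an in-neighbor and an out-neighbor.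
-/

open Finset

variable {V : Type*}

/-- `S` is an out-dominating set of the digraph with arc relation `A`. -/
def OutDom (A : V → V → Prop) (S : Finset V) : Prop :=
  ∀ v : V, v ∉ S → ∃ u ∈ S, A u v

/-- `S` is an in-dominating set. -/
def InDom (A : V → V → Prop) (S : Finset V) : Prop :=
  ∀ v : V, v ∉ S → ∃ u ∈ S, A v u

/-- `S` is a dominating set of the underlying undirected graph of the digraph `A`. -/
def DomG (A : V → V → Prop) (S : Finset V) : Prop :=
  ∀ v : V, v ∉ S → ∃ u ∈ S, A u v ∨ A v u

/-- Secure dominating set of the underlying undirected graph. -/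
def SDS [DecidableEq V] (A : V → V → Prop) (S : Finset V) : Prop :=
  DomG A S ∧ ∀ v : V, v ∉ S → ∃ u ∈ S, (A u v ∨ A v u) ∧ DomG A (insert v (S.erase u))

/-- Out-secure dominating set (OSDS). -/
def OSDS [DecidableEq V] (A : V → V → Prop) (S : Finset V) : Prop :=
  DomG A S ∧ ∀ v : V, v ∉ S → ∃ u ∈ S, A u v ∧ DomG A (insert v (S.erase u))

/-- Secure out-dominating set (SODS). -/
def SODS [DecidableEq V] (A : V → V → Prop) (S : Finset V) : Prop :=
  OutDom A S ∧ ∀ v : V, v ∉ S → ∃ u ∈ S, (A v u ∨ A u v) ∧ OutDom A (insert v (S.erase u))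

/-- Out-secure out-dominating set (OSODS). -/
def OSODS [DecidableEq V] (A : V → V → Prop) (S : Finset V) : Prop :=
  OutDom A S ∧ ∀ v : V, v ∉ S → ∃ u ∈ S, A u v ∧ OutDom A (insert v (S.erase u))

/-- In-secure out-dominating set (ISODS). -/
def ISODS [DecidableEq V] (A : V → V → Prop) (S : Finset V) : Prop :=
  OutDom A S ∧ ∀ v : V, v ∉ S → ∃ u ∈ S, A v u ∧ OutDom A (insert v (S.erase u))

/-- Twin dominating set. -/
def TwinDom (A : V → V → Prop) (S : Finset V) : Prop :=
  ∀ v : V, v ∉ S → (∃ u ∈ S, A v u) ∧ (∃ u ∈ S, A u v)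

/-- The out-domination number `γ⁺`. -/
noncomputable def gammaPlus [Fintype V] (A : V → V → Prop) : ℕ :=
  sInf {k | ∃ S : Finset V, OutDom A S ∧ S.card = k}

/-- The in-domination number `γ⁻`. -/
noncomputable def gammaMinus [Fintype V] (A : V → V → Prop) : ℕ :=
  sInf {k | ∃ S : Finset V, InDom A S ∧ S.card = k}

/-- The secure domination number of the underlying undirected graph, `γ_s`. -/
noncomputable def gammaS [Fintype V] [DecidableEq V] (A : V → V → Prop) : ℕ :=
  sInf {k | ∃ S : Finset V, SDS A S ∧ S.card = k}

/-- The out-secure domination number `γ_os`. -/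
noncomputable def gammaOS [Fintype V] [DecidableEq V] (A : V → V → Prop) : ℕ :=
  sInf {k | ∃ S : Finset V, OSDS A S ∧ S.card = k}

/-- The secure out-domination number `γ_so`. -/
noncomputable def gammaSO [Fintype V] [DecidableEq V] (A : V → V → Prop) : ℕ :=
  sInf {k | ∃ S : Finset V, SODS A S ∧ S.card = k}

/-- The out-secure out-domination number `γ_oso`. -/
noncomputable def gammaOSO [Fintype V] [DecidableEq V] (A : V → V → Prop) : ℕ :=
  sInf {k | ∃ S : Finset V, OSODS A S ∧ S.card = k}

/-- The in-secure out-domination number `γ_iso`. -/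
noncomputable def gammaISO [Fintype V] [DecidableEq V] (A : V → V → Prop) : ℕ :=
  sInf {k | ∃ S : Finset V, ISODS A S ∧ S.card = k}

/-- The twin domination number `γ*`. -/
noncomputable def gammaTwin [Fintype V] (A : V → V → Prop) : ℕ :=
  sInf {k | ∃ S : Finset V, TwinDom A S ∧ S.card = k}

/-- Out-degree `d⁺(u)`. -/
noncomputable def outDeg (A : V → V → Prop) (u : V) : ℕ := Nat.card {v | A u v}

/-- In-degree `d⁻(u)`. -/
noncomputable def inDeg (A : V → V → Prop) (u : V) : ℕ := Nat.card {v | A v u}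

/-- Maximum out-degree `Δ⁺`. -/
noncomputable def maxOutDeg [Fintype V] (A : V → V → Prop) : ℕ :=
  Finset.univ.sup fun u => outDeg A u

/-- Minimum out-degree `δ⁺`. -/
noncomputable def minOutDeg (A : V → V → Prop) : ℕ := sInf (Set.range fun u => outDeg A u)

/-- Minimum in-degree `δ⁻`. -/
noncomputable def minInDeg (A : V → V → Prop) : ℕ := sInf (Set.range fun u => inDeg A u)

/-- The set of out-private neighbors `pn⁺(u,S)`: vertices `w` with `N⁻[w] ∩ S = {u}`. -/
def pnPlus (A : V → V → Prop) (S : Finset V) (u : V) : Set V :=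
  {w | {x | A x w ∨ x = w} ∩ ↑S = {u}}

/-- The set of in-private neighbors `pn⁻(u,S)`: vertices `w` with `N⁺[w] ∩ S = {u}`. -/
def pnMinus (A : V → V → Prop) (S : Finset V) (u : V) : Set V :=
  {w | {x | A w x ∨ x = w} ∩ ↑S = {u}}

/-- `A` is an orientation of the simple graph `G`. -/
def IsOrientation (G : SimpleGraph V) (A : V → V → Prop) : Prop :=
  (∀ u v : V, G.Adj u v ↔ (A u v ∨ A v u)) ∧ (∀ u v : V, A u v → ¬ A v u)

/-- The arc relation of the directed path `P_n` on `Fin n`. -/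
def pathArc (n : ℕ) : Fin n → Fin n → Prop := fun i j => (i : ℕ) + 1 = (j : ℕ)

/-- The arc relation of the directed cycle `C_n` on `Fin n`. -/
def cycleArc (n : ℕ) : Fin n → Fin n → Prop := fun i j => ((i : ℕ) + 1) % n = (j : ℕ)

theorem outDeg_eq_zero_iff (A : V → V → Prop) (u : V) [Finite {v | A u v}] :
    outDeg A u = 0 ↔ ∀ v, ¬ A u v := by
  rw [outDeg, Finite.card_eq_zero_iff, Set.isEmpty_coe_sort, Set.eq_empty_iff_forall_notMem]
  rfl

theorem inDeg_eq_zero_iff (A : V → V → Prop) (u : V) [Finite {v | A v u}] :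
    inDeg A u = 0 ↔ ∀ v, ¬ A v u :=
  outDeg_eq_zero_iff (fun x y => A y x) u

theorem OutDom.mono {A : V → V → Prop} {S T : Finset V} (hS : OutDom A S) (hST : S ⊆ T) :
    OutDom A T := fun v hv =>
  let ⟨u, hu, huv⟩ := hS v (notMem_mono hST hv)
  ⟨u, hST hu, huv⟩

theorem OSODS.mono [DecidableEq V] {A : V → V → Prop} {S T : Finset V} (hS : OSODS A S)
    (hST : S ⊆ T) : OSODS A T := by
  refine ⟨hS.1.mono hST, fun v hv => ?_⟩
  obtain ⟨u, hu, huv, hswap⟩ := hS.2 v (notMem_mono hST hv)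
  exact ⟨u, hST hu, huv, hswap.mono (insert_subset_insert v (erase_subset_erase u hST))⟩

section Fintype

variable [Fintype V] [DecidableEq V] {A : V → V → Prop}

theorem outDom_univ_erase_iff {v : V} : OutDom A (univ.erase v) ↔ ∃ u ≠ v, A u v := by
  simp [OutDom]

theorem osods_univ (A : V → V → Prop) : OSODS A univ := by
  simp [OSODS, OutDom]

theorem osods_univ_erase_iff {v : V} :
    OSODS A (univ.erase v) ↔ ∃ u ≠ v, A u v ∧ ∃ w ≠ u, A w u := by
  have swap_eq {u : V} (huv : u ≠ v) : insert v ((univ.erase v).erase u) = univ.erase u := by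
    rw [erase_right_comm, insert_erase (mem_erase.2 ⟨huv.symm, mem_univ v⟩)]
  constructor
  · rintro ⟨-, hdefend⟩
    obtain ⟨u, hu, huv, hswap⟩ := hdefend v (notMem_erase v univ)
    have hne : u ≠ v := ne_of_mem_erase hu
    rw [swap_eq hne, outDom_univ_erase_iff] at hswap
    exact ⟨u, hne, huv, hswap⟩
  · rintro ⟨u, hne, huv, hw⟩
    refine ⟨outDom_univ_erase_iff.2 ⟨u, hne, huv⟩, fun x hx => ?_⟩
    obtain rfl : x = v := by simpa using hx
    refine ⟨u, mem_erase.2 ⟨hne, mem_univ u⟩, huv, ?_⟩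
    rwa [swap_eq hne, outDom_univ_erase_iff]

theorem OSODS.gammaOSO_le_card {S : Finset V} (hS : OSODS A S) : gammaOSO A ≤ #S :=
  Nat.sInf_le ⟨S, hS, rfl⟩

theorem exists_osods_card_eq_gammaOSO (A : V → V → Prop) :
    ∃ S : Finset V, OSODS A S ∧ #S = gammaOSO A :=
  Nat.sInf_mem (s := {k | ∃ S : Finset V, OSODS A S ∧ #S = k}) ⟨_, univ, osods_univ A, rfl⟩

theorem gammaOSO_eq_card_iff_forall_not_osods_univ_erase :
    gammaOSO A = Fintype.card V ↔ ∀ v, ¬ OSODS A (univ.erase v) := by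
  constructor
  · intro h v hv
    exact (hv.gammaOSO_le_card.trans_lt (card_erase_lt_of_mem (mem_univ v))).ne h
  · intro h
    obtain ⟨S, hS, hcard⟩ := exists_osods_card_eq_gammaOSO A
    have hSuniv : S = univ := eq_univ_of_forall fun v => by
      by_contra hv
      exact h v (hS.mono (subset_erase.2 ⟨subset_univ S, hv⟩))
    rw [← hcard, hSuniv, card_univ]

end Fintype

/-- `γ_oso(D) = n` iff every vertex has `d⁺(u) = 0` or `d⁻(u) = 0`. -/
theorem stmt_4 [Fintype V] [DecidableEq V] (A : V → V → Prop) (hloop : ∀ v : V, ¬ A v v) :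
    gammaOSO A = Fintype.card V ↔ ∀ u : V, outDeg A u = 0 ∨ inDeg A u = 0 := by
  have ne_of_arc {u v : V} (huv : A u v) : u ≠ v := fun h => hloop v (h ▸ huv)
  simp only [gammaOSO_eq_card_iff_forall_not_osods_univ_erase, osods_univ_erase_iff,
    outDeg_eq_zero_iff, inDeg_eq_zero_iff]
  constructor
  · intro h u
    by_contra! hu
    obtain ⟨⟨v, huv⟩, w, hwu⟩ := hu
    exact h v ⟨u, ne_of_arc huv, huv, w, ne_of_arc hwu, hwu⟩
  · rintro h v ⟨u, -, huv, w, -, hwu⟩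
    exact (h u).elim (fun hout => hout v huv) (fun hin => hin w hwu)
end

section
/- Let G=(V,E) be a simple graph and let I⊆V be an independent set such that every vertex v∈I has degree d(v) ≥ 2 in G. Then there exists an orientation D of G such that γ_os(D) ≤ |V∖I|. -/
open Finset

variable {V : Type*}

/-!
Let `S = V ∖ I`. Since `I` is independent and its vertices have degree at least `2`, every vertex
outside `S` has two neighbors in `S`. Orient every edge between `S` and its complement away from
`S`. Then each `v ∉ S` is defended along an arc `u → v` with `u ∈ S`: after the exchange of `u` for
`v`, the vertex `u` is dominated by `v`, and any other vertex outside `S` has lost at most one of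
its two neighbors in `S`.
-/

/-- A set `S` of vertices is 2-dominating if every vertex outside `S` has at least two neighbors
in `S`. Domination of such a vertex survives the removal of any one vertex from `S`. -/
def IsTwoDominating (G : SimpleGraph V) (S : Set V) : Prop :=
  ∀ v ∉ S, (G.neighborSet v ∩ S).Nontrivial

theorem one_lt_degree_iff_nontrivial_neighborSet {G : SimpleGraph V} {v : V}
    [Fintype (G.neighborSet v)] : 1 < G.degree v ↔ (G.neighborSet v).Nontrivial := by
  rw [← G.card_neighborFinset_eq_degree, one_lt_card_iff_nontrivial, ← G.coe_neighborFinset,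
    nontrivial_coe]

theorem isTwoDominating_compl_of_isIndepSet {G : SimpleGraph V} {I : Set V} (hI : G.IsIndepSet I)
    (hnbr : ∀ v ∈ I, (G.neighborSet v).Nontrivial) : IsTwoDominating G Iᶜ := by
  intro v hv
  rw [Set.notMem_compl_iff] at hv
  have hsub : G.neighborSet v ⊆ Iᶜ := fun u huv hu => hI hv hu huv.ne huv
  rw [Set.inter_eq_left.mpr hsub]
  exact hnbr v hv

theorem isOrientation_of_injective {α : Type*} [LinearOrder α] (G : SimpleGraph V) {f : V → α}
    (hf : f.Injective) : IsOrientation G fun u v => G.Adj u v ∧ f u < f v := by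
  refine ⟨fun u v => ⟨fun huv => ?_, ?_⟩, fun u v huv hvu => huv.2.not_gt hvu.2⟩
  · exact (hf.ne huv.ne).lt_or_gt.imp (⟨huv, ·⟩) (⟨huv.symm, ·⟩)
  · rintro (huv | hvu)
    exacts [huv.1, hvu.1.symm]

theorem exists_isOrientation_arc_of_mem_of_notMem (G : SimpleGraph V) (S : Set V) :
    ∃ A : V → V → Prop, IsOrientation G A ∧ ∀ u ∈ S, ∀ v ∉ S, G.Adj u v → A u v := by
  obtain ⟨_, -⟩ := exists_wellFoundedLT V
  -- The truth value `u ∉ S` comes first, so the vertices of `S` precede all others.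
  let rank (u : V) : Prop ×ₗ V := toLex (u ∉ S, u)
  have rank_injective : rank.Injective := fun u v huv => congrArg (fun p => (ofLex p).2) huv
  refine ⟨_, isOrientation_of_injective G rank_injective, fun u hu v hv huv => ⟨huv, ?_⟩⟩
  exact Prod.Lex.toLex_lt_toLex.mpr (.inl (lt_of_le_not_ge (fun _ => hv) fun h => h hv hu))

section OutSecureDomination

variable {G : SimpleGraph V} {A : V → V → Prop} {S : Finset V}

theorem IsOrientation.domG_iff (hA : IsOrientation G A) :
    DomG A S ↔ ∀ v ∉ S, ∃ u ∈ S, G.Adj u v := by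
  simp only [DomG, hA.1]

theorem IsTwoDominating.exists_mem_adj_ne (hS : IsTwoDominating G S) {v : V} (hv : v ∉ S) (u : V) :
    ∃ w ∈ S, G.Adj w v ∧ w ≠ u := by
  obtain ⟨w, ⟨hvw, hwS⟩, hwu⟩ := (hS v hv).exists_ne u
  exact ⟨w, hwS, hvw.symm, hwu⟩

theorem IsTwoDominating.domG (hS : IsTwoDominating G S) (hA : IsOrientation G A) : DomG A S := by
  refine hA.domG_iff.mpr fun v hv => ?_
  obtain ⟨u, hu, huv, -⟩ := hS.exists_mem_adj_ne hv v
  exact ⟨u, hu, huv⟩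

theorem IsTwoDominating.domG_insert_erase [DecidableEq V] (hS : IsTwoDominating G S)
    (hA : IsOrientation G A) {u v : V} (huv : G.Adj u v) : DomG A (insert v (S.erase u)) := by
  refine hA.domG_iff.mpr fun w hw => ?_
  obtain rfl | hwu := eq_or_ne w u
  · exact ⟨v, mem_insert_self v _, huv.symm⟩
  · have hwS : w ∉ S := fun h => hw (mem_insert_of_mem (mem_erase.mpr ⟨hwu, h⟩))
    obtain ⟨x, hx, hxw, hxu⟩ := hS.exists_mem_adj_ne hwS u
    exact ⟨x, mem_insert_of_mem (mem_erase.mpr ⟨hxu, hx⟩), hxw⟩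

theorem IsTwoDominating.osds [DecidableEq V] (hS : IsTwoDominating G S) (hA : IsOrientation G A)
    (hout : ∀ u ∈ S, ∀ v ∉ S, G.Adj u v → A u v) : OSDS A S := by
  refine ⟨hS.domG hA, fun v hv => ?_⟩
  obtain ⟨u, hu, huv⟩ := hA.domG_iff.mp (hS.domG hA) v hv
  exact ⟨u, hu, hout u hu v hv huv, hS.domG_insert_erase hA huv⟩

theorem OSDS.gammaOS_le_card [Fintype V] [DecidableEq V] (hS : OSDS A S) : gammaOS A ≤ #S :=
  Nat.sInf_le ⟨S, hS, rfl⟩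

end OutSecureDomination

theorem stmt_12_general [Fintype V] [DecidableEq V] (G : SimpleGraph V) (S : Finset V)
    (hS : IsTwoDominating G S) :
    ∃ A : V → V → Prop, IsOrientation G A ∧ gammaOS A ≤ #S := by
  obtain ⟨A, hA, hout⟩ := exists_isOrientation_arc_of_mem_of_notMem G S
  exact ⟨A, hA, (hS.osds hA hout).gammaOS_le_card⟩

/-- if `I` is independent with all degrees at least `2`, then some orientation `D`
of `G` satisfies `γ_os(D) ≤ |V ∖ I|`. -/
theorem stmt_12 [Fintype V] [DecidableEq V] (G : SimpleGraph V) [DecidableRel G.Adj]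
    (I : Finset V) (hI : ∀ u ∈ I, ∀ v ∈ I, ¬ G.Adj u v)
    (hdeg : ∀ v ∈ I, 2 ≤ G.degree v) :
    ∃ A : V → V → Prop, IsOrientation G A ∧ gammaOS A ≤ (Finset.univ \ I).card := by
  refine stmt_12_general G _ ?_
  rw [← compl_eq_univ_sdiff, coe_compl]
  exact isTwoDominating_compl_of_isIndepSet (fun u hu v hv _ => hI u hu v hv)
    fun v hv => one_lt_degree_iff_nontrivial_neighborSet.mp (hdeg v hv)
end

section
/- For the directed path P_n = (v₁, v₂, ..., v_n) with n ≥ 1 vertices, γ_so(P_n) = ⌈3n/5⌉. Moreover, for the directed cycle C_n with n ≥ 3 vertices, γ_so(C_n) = ⌈3n/5⌉. -/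
/-!
For the lower bound let `A` have in- and out-degrees at most one and no directed cycles of length at
most two, let `S` be an SODS, and let `I ⊆ S` be the set of vertices of `S` all of whose
out-neighbors lie in `S`. Each `v ∉ S` has an in-neighbor in `S \ I`, and different `v` have
different in-neighbors, so `|V \ S| ≤ |S| - |I|`. If `v` is defended by its out-neighbor `d`, then
`d ∈ I`; if it is defended by its in-neighbor `u`, then `u` has an in-neighbor `w ∈ I`. Either way a
vertex of `I` determines `v`, so `|V \ S| ≤ 2 |I|`. Eliminating `|I|` gives `3 |V| ≤ 5 |S|`.

For the upper bound, `γ_so` does not increase when arcs are added, and it is subadditive over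
disjoint unions. Hence `γ_so(P_{n+5}) ≤ γ_so(P_n) + γ_so(P_5)`, and `γ_so(P_5) ≤ 3` because the
pattern `10110` is an SODS of `P_5`; likewise `101` gives `γ_so(P_3) ≤ 2`. Closing a path
into a cycle only adds an arc.
-/

open Finset

variable {V : Type*}

section Digraph

variable {W : Type*} {A : V → V → Prop} {B : W → W → Prop} {S : Finset V} {T : Finset W}

lemma OutDom.map (e : V ≃ W) (h : ∀ u v, A u v → B (e u) (e v)) (hS : OutDom A S) :
    OutDom B (S.map e.toEmbedding) := by
  intro w hw
  rw [mem_map_equiv] at hw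
  obtain ⟨u, hu, huw⟩ := hS _ hw
  exact ⟨e u, mem_map_of_mem _ hu, by simpa using h _ _ huw⟩

lemma OutDom.disjSum (hS : OutDom A S) (hT : OutDom B T) :
    OutDom (Sum.LiftRel A B) (S.disjSum T) := by
  rintro (v | w) hv
  · obtain ⟨u, hu, huv⟩ := hS v (by simpa using hv)
    exact ⟨.inl u, by simpa, .inl huv⟩
  · obtain ⟨u, hu, huw⟩ := hT w (by simpa using hv)
    exact ⟨.inr u, by simpa, .inr huw⟩

variable [DecidableEq V] [DecidableEq W]

lemma SODS.map (e : V ≃ W) (h : ∀ u v, A u v → B (e u) (e v)) (hS : SODS A S) :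
    SODS B (S.map e.toEmbedding) := by
  refine ⟨hS.1.map e h, fun w hw => ?_⟩
  obtain ⟨v, rfl⟩ := e.surjective w
  obtain ⟨u, hu, huv, hswap⟩ := hS.2 v (by simpa using hw)
  refine ⟨e u, mem_map_of_mem _ hu, huv.imp (h _ _) (h _ _), ?_⟩
  simpa only [map_insert, map_erase, Equiv.coe_toEmbedding] using hswap.map e h

lemma SODS.disjSum (hS : SODS A S) (hT : SODS B T) : SODS (Sum.LiftRel A B) (S.disjSum T) := by
  refine ⟨hS.1.disjSum hT.1, ?_⟩
  rintro (v | w) hv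
  · obtain ⟨u, hu, huv, hswap⟩ := hS.2 v (by simpa using hv)
    refine ⟨.inl u, by simpa, huv.imp .inl .inl, ?_⟩
    convert hswap.disjSum hT.1 using 1
    ext (x | x) <;> simp
  · obtain ⟨u, hu, huw, hswap⟩ := hT.2 w (by simpa using hv)
    refine ⟨.inr u, by simpa, huw.imp .inr .inr, ?_⟩
    convert hS.1.disjSum hswap using 1
    ext (x | x) <;> simp

lemma SODS.univ [Fintype V] (A : V → V → Prop) : SODS A univ :=
  ⟨fun v hv => absurd (mem_univ v) hv, fun v hv => absurd (mem_univ v) hv⟩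

variable [Fintype V] [Fintype W]

lemma SODS.gammaSO_le (hS : SODS A S) : gammaSO A ≤ #S :=
  Nat.sInf_le ⟨S, hS, rfl⟩

lemma gammaSO_le_card (A : V → V → Prop) : gammaSO A ≤ Fintype.card V :=
  (SODS.univ A).gammaSO_le

lemma exists_sods_card_eq_gammaSO (A : V → V → Prop) : ∃ S, SODS A S ∧ #S = gammaSO A :=
  Nat.sInf_mem (s := {k | ∃ S, SODS A S ∧ #S = k}) ⟨_, Finset.univ, SODS.univ A, rfl⟩

lemma gammaSO_le_gammaSO_of_equiv (e : V ≃ W) (h : ∀ u v, A u v → B (e u) (e v)) :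
    gammaSO B ≤ gammaSO A := by
  obtain ⟨S, hS, hcard⟩ := exists_sods_card_eq_gammaSO A
  simpa only [card_map, hcard] using (hS.map e h).gammaSO_le

lemma gammaSO_liftRel_le (A : V → V → Prop) (B : W → W → Prop) :
    gammaSO (Sum.LiftRel A B) ≤ gammaSO A + gammaSO B := by
  obtain ⟨S, hS, hcardS⟩ := exists_sods_card_eq_gammaSO A
  obtain ⟨T, hT, hcardT⟩ := exists_sods_card_eq_gammaSO B
  simpa only [card_disjSum, hcardS, hcardT] using (hS.disjSum hT).gammaSO_le

end Digraph

section LowerBound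

variable {A : V → V → Prop} {S : Finset V}

open Classical in
/-- The out-interior of `S`: the vertices of `S` all of whose out-neighbors lie in `S`. An
out-dominating `S` can lose any one of them and still dominate everything outside `S`. -/
noncomputable def outInterior (A : V → V → Prop) (S : Finset V) : Finset V :=
  {u ∈ S | ∀ v, A u v → v ∈ S}

lemma mem_outInterior {u : V} : u ∈ outInterior A S ↔ u ∈ S ∧ ∀ v, A u v → v ∈ S := by
  simp [outInterior]

lemma outInterior_subset : outInterior A S ⊆ S := fun _ hu => (mem_outInterior.1 hu).1

variable [DecidableEq V]

lemma OutDom.mem_outInterior_of_insert_erase [Std.Asymm A] (hA : Relator.LeftUnique A) {v d : V}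
    (hv : v ∉ S) (hd : d ∈ S) (hvd : A v d) (hswap : OutDom A (insert v (S.erase d))) :
    d ∈ outInterior A S := by
  refine mem_outInterior.2 ⟨hd, fun e hde => ?_⟩
  by_contra he
  have hev : e ≠ v := by rintro rfl; exact asymm hvd hde
  obtain ⟨x, hx, hxe⟩ := hswap e (by simp [hev, he])
  obtain rfl : x = d := hA hxe hde
  obtain rfl : x = v := by simpa using hx
  exact hv hd

lemma OutDom.exists_mem_outInterior_of_insert_erase [Std.Asymm A] (hA : Relator.RightUnique A)
    {u v : V} (hv : v ∉ S) (hu : u ∈ S) (huv : A u v) (hswap : OutDom A (insert v (S.erase u))) :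
    ∃ w ∈ outInterior A S, A w u := by
  have hne : u ≠ v := by rintro rfl; exact hv hu
  obtain ⟨w, hw, hwu⟩ := hswap u (by simp [hne])
  have hwv : w ≠ v := by rintro rfl; exact asymm huv hwu
  have hwS : w ∈ S := mem_of_mem_erase ((mem_insert.1 hw).resolve_left hwv)
  exact ⟨w, mem_outInterior.2 ⟨hwS, fun e hwe => hA hwu hwe ▸ hu⟩, hwu⟩

lemma SODS.exists_mem_outInterior [Std.Asymm A] (hA : Relator.BiUnique A) (hS : SODS A S) {v : V}
    (hv : v ∉ S) :
    (∃ d ∈ outInterior A S, A v d) ∨ ∃ w ∈ outInterior A S, Relation.Comp A A w v := by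
  obtain ⟨u, hu, hvu | huv, hswap⟩ := hS.2 v hv
  · exact .inl ⟨u, hswap.mem_outInterior_of_insert_erase hA.1 hv hu hvu, hvu⟩
  · obtain ⟨w, hw, hwu⟩ := hswap.exists_mem_outInterior_of_insert_erase hA.2 hv hu huv
    exact .inr ⟨w, hw, u, hwu, huv⟩

variable [Fintype V]

lemma OutDom.card_compl_add_card_outInterior_le (hA : Relator.RightUnique A) (hS : OutDom A S) :
    #Sᶜ + #(outInterior A S) ≤ #S := by
  have hcompl : #Sᶜ ≤ #(S \ outInterior A S) := by
    refine card_le_card_of_forall_subsingleton (fun v u => A u v) (fun v hv => ?_)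
      fun u _ v hv w hw => hA hv.2 hw.2
    obtain ⟨u, hu, huv⟩ := hS v (mem_compl.1 hv)
    exact ⟨u, mem_sdiff.2 ⟨hu, fun hI => mem_compl.1 hv ((mem_outInterior.1 hI).2 v huv)⟩, huv⟩
  have hsdiff := card_sdiff_add_card_eq_card (outInterior_subset (A := A) (S := S))
  omega

lemma SODS.card_compl_le_two_mul_card_outInterior [Std.Asymm A] (hA : Relator.BiUnique A)
    (hS : SODS A S) : #Sᶜ ≤ 2 * #(outInterior A S) := by
  classical
  let outDefended : Finset V := {v | ∃ d ∈ outInterior A S, A v d}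
  let inDefended : Finset V := {v | ∃ w ∈ outInterior A S, Relation.Comp A A w v}
  have hcover : Sᶜ ⊆ outDefended ∪ inDefended := fun v hv => by
    simpa [outDefended, inDefended] using hS.exists_mem_outInterior hA (mem_compl.1 hv)
  have hout : #outDefended ≤ #(outInterior A S) :=
    card_le_card_of_forall_subsingleton A (fun v hv => (mem_filter.1 hv).2)
      fun d _ v hv w hw => hA.1 hv.2 hw.2
  have hin : #inDefended ≤ #(outInterior A S) := by
    refine card_le_card_of_forall_subsingleton (fun v w => Relation.Comp A A w v)
      (fun v hv => (mem_filter.1 hv).2) ?_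
    rintro w - v ⟨-, u, hwu, huv⟩ v' ⟨-, u', hwu', huv'⟩
    obtain rfl := hA.2 hwu hwu'
    exact hA.2 huv huv'
  calc #Sᶜ ≤ #outDefended + #inDefended := (card_le_card hcover).trans (card_union_le _ _)
    _ ≤ 2 * #(outInterior A S) := by omega

theorem SODS.three_mul_card_univ_le [Std.Asymm A] (hA : Relator.BiUnique A) (hS : SODS A S) :
    3 * Fintype.card V ≤ 5 * #S := by
  have h₁ := hS.1.card_compl_add_card_outInterior_le hA.2
  have h₂ := hS.card_compl_le_two_mul_card_outInterior hA
  have h₃ := card_add_card_compl S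
  omega

theorem three_mul_card_le_five_mul_gammaSO [Std.Asymm A] (hA : Relator.BiUnique A) :
    3 * Fintype.card V ≤ 5 * gammaSO A := by
  obtain ⟨S, hS, hcard⟩ := exists_sods_card_eq_gammaSO A
  exact hcard ▸ hS.three_mul_card_univ_le hA

end LowerBound

section PathAndCycle

lemma cycleArc_iff {n : ℕ} {u v : Fin n} :
    cycleArc n u v ↔ pathArc n u v ∨ (u : ℕ) + 1 = n ∧ (v : ℕ) = 0 := by
  rcases (Nat.succ_le_of_lt u.isLt).lt_or_eq with h | h
  · simp only [cycleArc, pathArc, Nat.mod_eq_of_lt h]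
    omega
  · simp only [cycleArc, pathArc, Nat.succ_eq_add_one] at h ⊢
    rw [h, Nat.mod_self]
    omega

lemma biUnique_pathArc (n : ℕ) : Relator.BiUnique (pathArc n) := by
  constructor <;> intro u v w <;> simp only [pathArc] <;> omega

lemma biUnique_cycleArc (n : ℕ) : Relator.BiUnique (cycleArc n) := by
  constructor <;> intro u v w <;> simp only [cycleArc_iff, pathArc] <;> omega

instance asymm_pathArc (n : ℕ) : Std.Asymm (pathArc n) where
  asymm u v := by simp only [pathArc]; omega

lemma asymm_cycleArc {n : ℕ} (hn : 3 ≤ n) : Std.Asymm (cycleArc n) where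
  asymm u v := by simp only [cycleArc_iff, pathArc]; omega

lemma gammaSO_cycleArc_le_gammaSO_pathArc (n : ℕ) : gammaSO (cycleArc n) ≤ gammaSO (pathArc n) :=
  gammaSO_le_gammaSO_of_equiv (Equiv.refl _) fun _ _ h => cycleArc_iff.2 (.inl h)

lemma gammaSO_pathArc_add_le (m n : ℕ) :
    gammaSO (pathArc (m + n)) ≤ gammaSO (pathArc m) + gammaSO (pathArc n) := by
  refine (gammaSO_le_gammaSO_of_equiv finSumFinEquiv ?_).trans (gammaSO_liftRel_le _ _)
  rintro _ _ (⟨h⟩ | ⟨h⟩) <;>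
    simp only [pathArc, finSumFinEquiv_apply_left, finSumFinEquiv_apply_right, Fin.val_castAdd,
      Fin.val_natAdd] at h ⊢ <;>
    omega

lemma gammaSO_pathArc_three_le : gammaSO (pathArc 3) ≤ 2 := by
  have h : SODS (pathArc 3) {0, 2} := by simp only [SODS, OutDom, pathArc]; decide
  exact h.gammaSO_le

lemma gammaSO_pathArc_five_le : gammaSO (pathArc 5) ≤ 3 := by
  have h : SODS (pathArc 5) {0, 2, 3} := by simp only [SODS, OutDom, pathArc]; decide
  exact h.gammaSO_le

lemma gammaSO_pathArc_le (n : ℕ) : gammaSO (pathArc n) ≤ n :=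
  (gammaSO_le_card (pathArc n)).trans_eq (Fintype.card_fin n)

theorem five_mul_gammaSO_pathArc_le : ∀ n : ℕ, 5 * gammaSO (pathArc n) ≤ 3 * n + 4
  | 0 | 1 | 2 => by linarith [gammaSO_pathArc_le 0, gammaSO_pathArc_le 1, gammaSO_pathArc_le 2]
  | 3 => by linarith [gammaSO_pathArc_three_le]
  | 4 => by
    linarith [gammaSO_pathArc_add_le 3 1, gammaSO_pathArc_three_le, gammaSO_pathArc_le 1]
  | n + 5 => by
    linarith [gammaSO_pathArc_add_le n 5, gammaSO_pathArc_five_le, five_mul_gammaSO_pathArc_le n]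

end PathAndCycle

lemma natCeil_natCast_div_natCast (a : ℕ) {b : ℕ} (hb : 0 < b) :
    ⌈(a : ℚ) / b⌉₊ = a ⌈/⌉ b := by
  refine eq_of_forall_ge_iff fun c => ?_
  rw [Nat.ceil_le, div_le_iff₀' (by exact_mod_cast hb), ceilDiv_le_iff_le_mul hb]
  exact_mod_cast Iff.rfl

/-- `γ_so(P_n) = ⌈3n/5⌉` for `n ≥ 1`, and `γ_so(C_n) = ⌈3n/5⌉` for `n ≥ 3`. -/
theorem stmt_19 (n : ℕ) :
    (1 ≤ n → gammaSO (pathArc n) = ⌈(3 * (n : ℚ)) / 5⌉₊) ∧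
    (3 ≤ n → gammaSO (cycleArc n) = ⌈(3 * (n : ℚ)) / 5⌉₊) := by
  have hceil : ⌈(3 * (n : ℚ)) / 5⌉₊ = (3 * n + 4) / 5 := by
    exact_mod_cast natCeil_natCast_div_natCast (3 * n) (b := 5) (by norm_num)
  have hupper := five_mul_gammaSO_pathArc_le n
  rw [hceil]
  constructor
  · intro _
    have hlower := three_mul_card_le_five_mul_gammaSO (biUnique_pathArc n)
    rw [Fintype.card_fin] at hlower
    omega
  · intro hn
    have := asymm_cycleArc hn
    have hlower := three_mul_card_le_five_mul_gammaSO (biUnique_cycleArc n)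
    have hle := gammaSO_cycleArc_le_gammaSO_pathArc n
    rw [Fintype.card_fin] at hlower
    omega
end
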